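/- (Littlewood) For n variables x_1,...,x_n, the sum of Schur functions Σ_{λ∈P_n} s_λ(x_1,...,x_n), over all partitions λ of Frobenius form (α_1,...,α_r | α_1+1,...,α_r+1) with α_1 ≤ n−1, equals Π_{1≤i<j≤n}(1 + x_i x_j). -/

import Mathlib

open Finset

/-- Partitions of Frobenius form `(α₁,…,α_r | α₁+1,…,α_r+1)` with at most `n` parts,
encoded as antitone functions `Fin n → Fin n` (0-indexed parts): antitone, and every
diagonal cell `i` (i.e. `λ_i ≥ i+1`, 0-indexed row `i`) has conjugate part
`λ'_{i+1} = λ_{i+1} + 1`, i.e. `#{j | λ_j ≥ i+1} = λ_i + 1`. -/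
def frobeniusSet (n : ℕ) : Finset (Fin n → Fin n) :=
  Finset.univ.filter (fun l =>
    (∀ i j : Fin n, i ≤ j → l j ≤ l i) ∧
    ∀ i : Fin n, (i : ℕ) + 1 ≤ (l i : ℕ) →
      (Finset.univ.filter (fun j : Fin n => (i : ℕ) + 1 ≤ (l j : ℕ))).card = (l i : ℕ) + 1)

/-- The Schur polynomial in `n` variables, via the bialternant formula
`s_λ = det(x_i^{λ_j + n − j}) / Π_{i<j}(x_i − x_j)` (0-indexed: exponent
`λ_j + n − 1 − j`). -/
def schur {F : Type*} [Field F] {n : ℕ} (l : Fin n → Fin n) (x : Fin n → F) : F :=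
  Matrix.det (Matrix.of fun i j : Fin n => x i ^ ((l j : ℕ) + (n - 1 - (j : ℕ)))) /
    ∏ i : Fin n, ∏ j ∈ Ioi i, (x i - x j)

/-- Extend by a zero part. -/
def extU {n : ℕ} (l : Fin n → Fin n) : Fin (n + 1) → Fin (n + 1) :=
  Fin.snoc (α := fun _ => Fin (n + 1)) (fun j => (l j).castSucc) 0

/-- Add a first hook of maximal size. -/
def extV {n : ℕ} (l : Fin n → Fin n) : Fin (n + 1) → Fin (n + 1) :=
  Fin.cons (α := fun _ => Fin (n + 1)) (Fin.last n) (fun j => (l j).succ)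

lemma extU_inj {n : ℕ} : Function.Injective (extU (n := n)) := by
  intro a b h
  funext j
  have := congrFun h j.castSucc
  simpa [extU] using this

lemma extV_inj {n : ℕ} : Function.Injective (extV (n := n)) := by
  intro a b h
  funext j
  have := congrFun h j.succ
  simpa [extV] using this

lemma mem_extU {n : ℕ} (l : Fin n → Fin n) :
    extU l ∈ frobeniusSet (n + 1) ↔ l ∈ frobeniusSet n := by
  simp only [frobeniusSet, mem_filter, mem_univ, true_and, Finset.card_filter,
    Fin.sum_univ_castSucc, Fin.forall_fin_succ', extU, Fin.snoc_castSucc, Fin.snoc_last]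
  simp [Fin.le_last]

lemma mem_extV {n : ℕ} (l : Fin n → Fin n) (hn : 0 < n) :
    extV l ∈ frobeniusSet (n + 1) ↔ l ∈ frobeniusSet n := by
  simp only [frobeniusSet, mem_filter, mem_univ, true_and, Finset.card_filter,
    Fin.sum_univ_succ, Fin.forall_fin_succ, extV, Fin.cons_zero, Fin.cons_succ]
  have h : ∀ i : Fin n, ((i : ℕ) + 1 ≤ (l i : ℕ)) → (i : ℕ) + 1 + 1 ≤ n := by
    intro i hi
    have := (l i).2
    omega
  simp only [Fin.val_succ, Fin.val_zero, Fin.val_last, Fin.succ_le_succ_iff, Fin.le_last,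
    Fin.zero_le, zero_add, Nat.le_add_left, add_le_add_iff_right, if_true, forall_true_left,
    implies_true, true_and, le_refl, sum_const, card_univ, Fintype.card_fin, smul_eq_mul, mul_one]
  constructor
  · rintro ⟨h1, -, h3⟩
    refine ⟨fun i j hij => (h1 i).2 j hij, fun i hi => ?_⟩
    have h4 := h3 i hi
    rw [if_pos (by have := (l i).2; omega)] at h4
    omega
  · rintro ⟨h1, h3⟩
    refine ⟨fun i => ⟨fun h => ?_, fun j hij => h1 i j hij⟩, fun _ => ?_,
      fun i hi => ?_⟩
    · exact absurd h (by simp)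
    · rw [if_pos (by omega)]; omega
    · have h4 := h3 i hi
      rw [if_pos (by have := (l i).2; omega)]
      omega

lemma cases_ext {n : ℕ} (hn : 0 < n) (l : Fin (n + 1) → Fin (n + 1))
    (hl : l ∈ frobeniusSet (n + 1)) : (∃ l', extU l' = l) ∨ ∃ l', extV l' = l := by
  simp only [frobeniusSet, mem_filter, mem_univ, true_and] at hl
  obtain ⟨h1, h2⟩ := hl
  by_cases h0 : l (Fin.last n) = 0
  · left
    have hlt : ∀ j : Fin (n + 1), (l j : ℕ) < n := by
      intro j
      have hj : (l j : ℕ) ≤ l 0 := h1 0 j (Fin.zero_le _)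
      by_contra hc
      have hl0 := (l 0).2
      have h3 := h2 0 (by simp; omega)
      have h4 : (univ.filter (fun j : Fin (n + 1) =>
          ((0 : Fin (n + 1)) : ℕ) + 1 ≤ (l j : ℕ))) = univ := by
        apply Finset.eq_univ_of_card
        rw [h3, Fintype.card_fin]
        omega
      have h5 : Fin.last n ∈ univ.filter (fun j : Fin (n + 1) =>
          ((0 : Fin (n + 1)) : ℕ) + 1 ≤ (l j : ℕ)) := by rw [h4]; exact mem_univ _
      simp [h0] at h5
    refine ⟨fun j => ⟨l j.castSucc, hlt _⟩, ?_⟩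
    funext j
    refine Fin.lastCases ?_ (fun j => ?_) j
    · simp [extU, h0]
    · simp only [extU, Fin.snoc_castSucc]; ext; simp
  · right
    have hpos : ∀ j, 1 ≤ (l j : ℕ) := by
      intro j
      have hj : (l (Fin.last n) : ℕ) ≤ l j := h1 j _ (Fin.le_last _)
      have : (l (Fin.last n) : ℕ) ≠ 0 := fun h => h0 (Fin.ext h)
      omega
    have h3 := h2 0 (by simpa using hpos 0)
    rw [Finset.filter_true_of_mem (by intro j _; simpa using hpos j)] at h3
    simp at h3
    refine ⟨fun j => (l j.succ).pred (fun h => by have := hpos j.succ; rw [h] at this; simp at this), ?_⟩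
    funext j
    refine Fin.cases ?_ (fun j => ?_) j
    · simp only [extV, Fin.cons_zero]; ext; simpa using h3
    · simp [extV]

lemma sum_frob {M : Type*} [AddCommMonoid M] {n : ℕ} (hn : 0 < n)
    (g : (Fin (n + 1) → Fin (n + 1)) → M) :
    ∑ l ∈ frobeniusSet (n + 1), g l = ∑ l ∈ frobeniusSet n, (g (extV l) + g (extU l)) := by
  classical
  have h : frobeniusSet (n + 1) =
      (frobeniusSet n).image extV ∪ (frobeniusSet n).image extU := by
    ext l
    simp only [mem_union, mem_image]
    constructor
    · intro hl
      rcases cases_ext hn l hl with ⟨l', rfl⟩ | ⟨l', rfl⟩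
      · exact Or.inr ⟨l', (mem_extU l').1 hl, rfl⟩
      · exact Or.inl ⟨l', (mem_extV l' hn).1 hl, rfl⟩
    · rintro (⟨l', hl, rfl⟩ | ⟨l', hl, rfl⟩)
      · exact (mem_extV l' hn).2 hl
      · exact (mem_extU l').2 hl
  rw [h, sum_union, sum_image (extV_inj.injOn), sum_image (extU_inj.injOn), sum_add_distrib]
  rw [Finset.disjoint_left]
  intro l h1 h2
  simp only [mem_image] at h1 h2
  obtain ⟨a, _, rfl⟩ := h1
  obtain ⟨b, _, hb⟩ := h2
  obtain ⟨m, rfl⟩ : ∃ m, n = m + 1 := ⟨n - 1, by omega⟩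
  have := congrFun hb (Fin.last _)
  rw [extU, extV, Fin.snoc_last, ← Fin.succ_last, Fin.cons_succ] at this
  exact (Fin.succ_ne_zero _ this.symm)

/-- The combined columns. -/
def comb {V : Type*} [AddCommGroup V] (c : ℤ → V) (k : ℕ) : V :=
  if k = 0 then c 0 else c k + (-1 : ℤ) ^ k • c (-k)

lemma alt_sum {R V W : Type*} [CommRing R] [AddCommGroup V] [Module R V] [AddCommGroup W]
    [Module R W] (c : ℤ → V) (n : ℕ) (f : V [⋀^Fin (n + 1)]→ₗ[R] W) :
    ∑ l ∈ frobeniusSet (n + 1), f (fun j => c ((l j : ℤ) - (j : ℤ))) =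
      f (fun j => comb c (n - (j : ℕ))) := by
  induction n with
  | zero =>
    have : frobeniusSet 1 = {fun _ => 0} := by decide
    rw [this, sum_singleton]
    congr 1
    funext j
    simp [comb]
  | succ n ih =>
    rw [sum_frob (Nat.succ_pos n)]
    have key : ∀ l : Fin (n + 1) → Fin (n + 1),
        f (fun j => c ((extV l j : ℤ) - (j : ℤ))) + f (fun j => c ((extU l j : ℤ) - (j : ℤ))) =
        f.curryLeft (comb c (n + 1)) (fun j => c ((l j : ℤ) - (j : ℤ))) := by
      intro l
      have e1 : (fun j => c ((extV l j : ℤ) - (j : ℤ))) =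
          Matrix.vecCons (c ((n + 1 : ℕ) : ℤ)) (fun j => c ((l j : ℤ) - (j : ℤ))) := by
        funext j
        refine Fin.cases ?_ (fun j => ?_) j
        · simp [extV]
        · simp [extV]
      have e2 : (fun j => c ((extU l j : ℤ) - (j : ℤ))) =
          Fin.snoc (α := fun _ => V) (fun j => c ((l j : ℤ) - (j : ℤ))) (c (-((n + 1 : ℕ) : ℤ))) := by
        funext j
        refine Fin.lastCases ?_ (fun j => ?_) j
        · simp [extU]
        · simp [extU]
      have e3 : f (Fin.snoc (α := fun _ => V) (fun j => c ((l j : ℤ) - (j : ℤ)))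
          (c (-((n + 1 : ℕ) : ℤ)))) = (-1 : ℤ) ^ (n + 1) •
          f.curryLeft (c (-((n + 1 : ℕ) : ℤ))) (fun j => c ((l j : ℤ) - (j : ℤ))) := by
        rw [Fin.snoc_eq_cons_rotate]
        have := f.map_perm (Fin.cons (α := fun _ => V) (c (-((n + 1 : ℕ) : ℤ)))
          (fun j => c ((l j : ℤ) - (j : ℤ)))) (finRotate _)
        rw [sign_finRotate] at this
        refine this.trans ?_
        rw [Units.smul_def]
        simp [Matrix.vecCons]
      rw [e1, e2, e3, comb, if_neg (Nat.succ_ne_zero n)]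
      rw [map_add, map_zsmul]
      simp
    rw [sum_congr rfl (fun l _ => key l), ih, AlternatingMap.curryLeft_apply_apply]
    congr 1
    funext j
    refine Fin.cases ?_ (fun j => ?_) j
    · simp
    · simp

/-- Coefficients of Lucas polynomials. -/
def luc (F : Type*) [Field F] : ℕ → ℕ → F
  | 0, m => if m = 0 then 2 else 0
  | 1, m => if m = 1 then 1 else 0
  | k + 2, 0 => luc F k 0
  | k + 2, m + 1 => luc F (k + 1) m + luc F k (m + 1)

lemma luc_zero (F : Type*) [Field F] (k : ℕ) : ∀ m, k < m → luc F k m = 0 := by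
  induction k using Nat.strong_induction_on with
  | _ k ih =>
    intro m hm
    match k, m with
    | 0, m => simp [luc]; omega
    | 1, m => simp [luc]; omega
    | k + 2, 0 => omega
    | k + 2, m + 1 =>
      rw [luc, ih (k + 1) (by omega) m (by omega), ih k (by omega) (m + 1) (by omega), add_zero]

lemma luc_diag (F : Type*) [Field F] (k : ℕ) : luc F (k + 1) (k + 1) = 1 := by
  induction k with
  | zero => simp [luc]
  | succ k ih => rw [luc, ih, luc_zero F k _ (by omega), add_zero]

lemma luc_sum {F : Type*} [Field F] (x : F) (k : ℕ) : ∀ N, k ≤ N →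
    ∑ m ∈ range (N + 1), luc F k m * ((x ^ 2 - 1) ^ m * x ^ (N - m)) =
      x ^ (N + k) + (-1) ^ k * x ^ (N - k) := by
  induction k using Nat.strong_induction_on with
  | _ k ih =>
    intro N hN
    match k with
    | 0 => simp [luc]; ring
    | 1 =>
      obtain ⟨M, rfl⟩ : ∃ M, N = M + 1 := ⟨N - 1, by omega⟩
      simp [luc]; ring
    | k + 2 =>
      obtain ⟨M, rfl⟩ : ∃ M, N = M + k + 2 := ⟨N - k - 2, by omega⟩
      have h1 := ih (k + 1) (by omega) (M + k + 1) (by omega)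
      have h2 := ih k (by omega) (M + k + 2) (by omega)
      rw [sum_range_succ'] at h2 ⊢
      have : ∀ m ∈ range (M + k + 2), luc F (k + 2) (m + 1) *
          ((x ^ 2 - 1) ^ (m + 1) * x ^ (M + k + 2 - (m + 1))) =
          (x ^ 2 - 1) * (luc F (k + 1) m * ((x ^ 2 - 1) ^ m * x ^ (M + k + 1 - m))) +
          luc F k (m + 1) * ((x ^ 2 - 1) ^ (m + 1) * x ^ (M + k + 2 - (m + 1))) := by
        intro m _
        rw [luc, show M + k + 2 - (m + 1) = M + k + 1 - m by omega]
        ring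
      rw [sum_congr rfl this, sum_add_distrib, ← mul_sum, h1, luc, add_assoc, h2]
      rw [show M + k + 1 - (k + 1) = M by omega, show M + k + 2 - k = M + 2 by omega,
        show M + k + 2 - (k + 2) = M by omega]
      ring

/-- Coefficients with the constant one normalised. -/
def lucN (F : Type*) [Field F] (k m : ℕ) : F :=
  if k = 0 then (if m = 0 then 1 else 0) else luc F k m

lemma det_comb {F : Type*} [Field F] (n : ℕ) (x : Fin (n + 1) → F) (c : ℤ → Fin (n + 1) → F)
    (hc : ∀ k : ℕ, k ≤ n → ∀ i, c k i = x i ^ (n + k))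
    (hc' : ∀ k : ℕ, k ≤ n → ∀ i, c (-k) i = x i ^ (n - k)) :
    Matrix.det (Matrix.of fun j : Fin (n + 1) => comb c (n - (j : ℕ))) =
      ∏ i : Fin (n + 1), ∏ j ∈ Ioi i, ((x i - x j) * (1 + x i * x j)) := by
  have h : (Matrix.of fun j : Fin (n + 1) => comb c (n - (j : ℕ))) =
      (Matrix.of fun j m : Fin (n + 1) => lucN F (n - (j : ℕ)) (n - (m : ℕ))) *
      (Matrix.projVandermonde x (fun i => x i ^ 2 - 1)).transpose := by
    ext j i
    rw [Matrix.mul_apply]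
    simp only [Matrix.of_apply, Matrix.transpose_apply, Matrix.projVandermonde_apply]
    have hs : ∑ m ∈ range (n + 1), lucN F (n - (j : ℕ)) m *
        ((x i ^ 2 - 1) ^ m * x i ^ (n - m)) = comb c (n - (j : ℕ)) i := by
      by_cases hk : n - (j : ℕ) = 0
      · rw [hk]
        simp [lucN, comb]
        simpa using (hc 0 (Nat.zero_le _) i).symm
      · simp only [lucN, if_neg hk, comb]
        rw [luc_sum _ _ _ (Nat.sub_le _ _), Pi.add_apply, Pi.smul_apply, hc _ (Nat.sub_le _ _),
          hc' _ (Nat.sub_le _ _)]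
        simp [zsmul_eq_mul]
    rw [← hs, ← Fin.sum_univ_eq_sum_range
      (fun m => lucN F (n - (j : ℕ)) m * ((x i ^ 2 - 1) ^ m * x i ^ (n - m))),
      ← Equiv.sum_comp Fin.revPerm]
    refine sum_congr rfl fun m _ => ?_
    have hm := m.2
    simp only [Fin.revPerm_apply, Fin.val_rev]
    rw [show n + 1 - ((m : ℕ) + 1) = n - m by omega, show n - (n - (m : ℕ)) = m by omega]
    ring
  rw [h, Matrix.det_mul, Matrix.det_transpose, Matrix.det_projVandermonde,
    Matrix.det_of_isUpperTriangular]
  · rw [prod_eq_one, one_mul]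
    · refine prod_congr rfl fun i _ => prod_congr rfl fun j _ => ?_
      ring
    · intro j _
      simp only [Matrix.of_apply]
      rcases Nat.eq_zero_or_pos (n - (j : ℕ)) with h0 | h0
      · simp [lucN, h0]
      · obtain ⟨k, hk⟩ : ∃ k, n - (j : ℕ) = k + 1 := ⟨n - j - 1, by omega⟩
        rw [hk, lucN, if_neg (Nat.succ_ne_zero k), luc_diag]
  · intro j m hjm
    have hjm' : (m : ℕ) < j := hjm
    have := j.2
    simp only [Matrix.of_apply, lucN]
    split_ifs with h1 h2
    · omega
    · rfl
    · exact luc_zero F _ _ (by omega)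

/-- Littlewood: `Σ_{λ ∈ 𝒫_n} s_λ(x₁,…,x_n) = Π_{1≤i<j≤n}(1 + x_i x_j)`. -/
theorem littlewood (F : Type*) [Field F] (n : ℕ) (x : Fin n → F)
    (hx : Function.Injective x) :
    ∑ l ∈ frobeniusSet n, schur l x = ∏ i : Fin n, ∏ j ∈ Ioi i, (1 + x i * x j) := by
  have hne : ∏ i : Fin n, ∏ j ∈ Ioi i, (x i - x j) ≠ 0 := by
    refine prod_ne_zero_iff.2 fun i _ => prod_ne_zero_iff.2 fun j hj => ?_
    rw [mem_Ioi] at hj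
    exact sub_ne_zero.2 fun h => hj.ne (hx h)
  simp only [schur]
  rw [← sum_div, div_eq_iff hne]
  simp only [← prod_mul_distrib]
  match n, x with
  | 0, x =>
    have : frobeniusSet 0 = {fun j => j} := by decide
    rw [this]
    simp
  | n + 1, x =>
    let c : ℤ → Fin (n + 1) → F := fun e i => x i ^ (n + e).toNat
    have h1 := alt_sum (R := F) c n Matrix.detRowAlternating
    have h2 := det_comb n x c
      (by intro k hk i; simp only [c]; congr 1)
      (by intro k hk i; simp only [c]; congr 1; omega)
    refine Eq.trans ?_ (h1.trans (Eq.trans h2 ?_))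
    · refine sum_congr rfl fun l _ => ?_
      rw [← Matrix.det_transpose]
      change _ = Matrix.det (Matrix.of _)
      congr 1
      ext j i
      simp only [Matrix.transpose_apply, Matrix.of_apply, c]
      congr 1
      have := j.2
      omega
    · refine prod_congr rfl fun i _ => prod_congr rfl fun j _ => ?_
      ring
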